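/- Let G ∈ C_3^2 be a simplified two-qudit third-level gate, with G Z₁ G* = D_{Φ₁}P₁, G X₁ G* = D_{Φ₂}P₂, G Z₂ G* = D_{Φ₃}P₃, G X₂ G* = D_{Φ₄}P₄, where each Φ_i is a symmetric 2×2 matrix over ZMod d and each P_i ∈ C_1^2 is a Pauli gate. Let M be the 3×4 matrix over ZMod d whose i-th column (i = 1,…,4) is ((Φ_i)₁₁, (Φ_i)₂₂, 2(Φ_i)₁₂). Then G is semi-Clifford if and only if the kernel of M, as a subspace of (ZMod d)^4, contains a Lagrangian semibasis. -/

import Mathlib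

open Matrix

noncomputable section

/-- The space of `n`-qudit gates: `d^n × d^n` complex matrices indexed by `(ZMod d)^n`. -/
abbrev Mat (d n : ℕ) := Matrix (Fin n → ZMod d) (Fin n → ZMod d) ℂ

/-- The primitive `d`-th root of unity `ω = exp(2πi/d)`. -/
def omega (d : ℕ) : ℂ := Complex.exp (2 * Real.pi * Complex.I / d)

/-- `ω` raised to the canonical integer lift of `c : ZMod d`. -/
def omegaPow (d : ℕ) (c : ZMod d) : ℂ := omega d ^ c.val

/-- The Pauli gate `Z^p`, acting by `Z^p |z⟩ = ω^(p·z) |z⟩`. -/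
def ZP (d n : ℕ) [NeZero d] (p : Fin n → ZMod d) : Mat d n :=
  Matrix.diagonal fun z => omegaPow d (p ⬝ᵥ z)

/-- The Pauli gate `X^q`, acting by `X^q |z⟩ = |z + q⟩`. -/
def XQ (d n : ℕ) [NeZero d] (q : Fin n → ZMod d) : Mat d n :=
  Matrix.of fun z' z => if z' = z + q then 1 else 0

/-- The basic Pauli gate `Z_i`. -/
def Zi (d n : ℕ) [NeZero d] (i : Fin n) : Mat d n := ZP d n (Pi.single i 1)

/-- The basic Pauli gate `X_i`. -/
def Xi (d n : ℕ) [NeZero d] (i : Fin n) : Mat d n := XQ d n (Pi.single i 1)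

/-- The Pauli group `C_1^n`. -/
def Pauli (d n : ℕ) [NeZero d] : Set (Mat d n) :=
  { M | ∃ (c : ZMod d) (p q : Fin n → ZMod d), M = omegaPow d c • (ZP d n p * XQ d n q) }

/-- The Clifford group `C_2^n`. -/
def Clifford (d n : ℕ) [NeZero d] : Set (Mat d n) :=
  { C | C ∈ Matrix.unitaryGroup (Fin n → ZMod d) ℂ ∧ ∀ P ∈ Pauli d n, C * P * Cᴴ ∈ Pauli d n }

/-- The third level `C_3^n` of the Clifford hierarchy. -/
def Third (d n : ℕ) [NeZero d] : Set (Mat d n) :=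
  { G | G ∈ Matrix.unitaryGroup (Fin n → ZMod d) ℂ ∧ ∀ P ∈ Pauli d n, G * P * Gᴴ ∈ Clifford d n }

/-- The quadratic diagonal gate `D_Φ |z⟩ = ω^(zᵀ Φ z) |z⟩`. -/
def quadGate (d n : ℕ) [NeZero d] (Φ : Matrix (Fin n) (Fin n) (ZMod d)) : Mat d n :=
  Matrix.diagonal fun z => omegaPow d (z ⬝ᵥ (Φ *ᵥ z))

/-- A gate is semi-Clifford if it is `C₁ D C₂` for Cliffords `C₁, C₂` and a
diagonal third-level gate `D`. -/
def SemiClifford (d n : ℕ) [NeZero d] (G : Mat d n) : Prop :=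
  ∃ C₁ ∈ Clifford d n, ∃ C₂ ∈ Clifford d n, ∃ D ∈ Third d n, D.IsDiag ∧ G = C₁ * D * C₂

/-- A Clifford gate is almost diagonal if it is `D_Φ P` for symmetric `Φ` and Pauli `P`. -/
def AlmostDiag (d n : ℕ) [NeZero d] (M : Mat d n) : Prop :=
  ∃ Φ : Matrix (Fin n) (Fin n) (ZMod d), Φ.IsSymm ∧ ∃ P ∈ Pauli d n, M = quadGate d n Φ * P

/-- A third-level gate is simplified if its conjugate tuple consists of
almost diagonal Clifford gates. -/
def Simplified (d n : ℕ) [NeZero d] (G : Mat d n) : Prop :=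
  ∀ i : Fin n, AlmostDiag d n (G * Zi d n i * Gᴴ) ∧ AlmostDiag d n (G * Xi d n i * Gᴴ)

/-- The symplectic product on `(ZMod d)⁴`. -/
def symp4 (d : ℕ) (u v : Fin 4 → ZMod d) : ZMod d :=
  u 0 * v 1 - u 1 * v 0 + u 2 * v 3 - u 3 * v 2



section helpers
set_option linter.unusedSectionVars false
variable {d n : ℕ} [NeZero d]

lemma om_pow : omega d ^ d = 1 := by
  rw [omega, ← Complex.exp_nat_mul]
  have : (d : ℂ) ≠ 0 := Nat.cast_ne_zero.mpr (NeZero.ne d)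
  rw [show (d : ℂ) * (2 * Real.pi * Complex.I / d) = 2 * Real.pi * Complex.I by field_simp]
  exact Complex.exp_two_pi_mul_I

lemma om_prim : IsPrimitiveRoot (omega d) d := Complex.isPrimitiveRoot_exp d (NeZero.ne d)

lemma op_add (a b : ZMod d) : omegaPow d (a + b) = omegaPow d a * omegaPow d b := by
  simp only [omegaPow]
  rw [ZMod.val_add, ← pow_add]
  exact (pow_eq_pow_mod _ om_pow).symm

lemma op_zero : omegaPow d (0 : ZMod d) = 1 := by simp [omegaPow]

lemma op_inj {a b : ZMod d} (h : omegaPow d a = omegaPow d b) : a = b := by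
  have := om_prim.pow_inj (ZMod.val_lt a) (ZMod.val_lt b) h
  exact ZMod.val_injective d this

lemma op_ne (a : ZMod d) : omegaPow d a ≠ 0 := by
  intro h
  have := op_add a (-a)
  rw [h, add_neg_cancel, op_zero] at this
  simp at this

lemma op_star (a : ZMod d) : star (omegaPow d a) = omegaPow d (-a) := by
  have hn : ‖omegaPow d a‖ = 1 := by
    rw [omegaPow, norm_pow, Complex.norm_eq_one_of_pow_eq_one om_pow (NeZero.ne d), one_pow]
  have h1 : omegaPow d a * omegaPow d (-a) = 1 := by rw [← op_add, add_neg_cancel, op_zero]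
  have h2 : omegaPow d a * star (omegaPow d a) = 1 := by
    have := Complex.mul_conj' (omegaPow d a)
    rw [hn] at this
    simpa using this
  exact mul_left_cancel₀ (op_ne a) (h2.trans h1.symm)

/-- Pauli matrices. -/
def WW (c : ZMod d) (p q : Fin n → ZMod d) : Mat d n := omegaPow d c • (ZP d n p * XQ d n q)

lemma WW_apply (c : ZMod d) (p q : Fin n → ZMod d) (x z) :
    WW c p q x z = if x = z + q then omegaPow d (c + p ⬝ᵥ x) else 0 := by
  simp only [WW, ZP, XQ, Matrix.smul_apply, Matrix.diagonal_mul, Matrix.of_apply, op_add]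
  split_ifs <;> simp

lemma WW_mul (c c' : ZMod d) (p q p' q' : Fin n → ZMod d) :
    WW c p q * WW c' p' q' = WW (c + c' - p' ⬝ᵥ q) (p + p') (q + q') := by
  ext x z
  rw [Matrix.mul_apply]
  simp only [WW_apply]
  rw [Finset.sum_eq_single (z + q')]
  · simp only [if_true, ← add_assoc]
    rw [add_right_comm z q q']
    split_ifs with h
    · rw [← op_add, h]
      congr 1
      simp only [dotProduct_add, add_dotProduct]
      ring
    · simp
  · intro b _ hb
    simp [hb]
  · simp

lemma WW_one : WW (d := d) (n := n) 0 0 0 = 1 := by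
  ext x z
  simp [WW_apply, Matrix.one_apply, op_zero]

lemma WW_star (c : ZMod d) (p q : Fin n → ZMod d) :
    (WW c p q)ᴴ = WW (-c - p ⬝ᵥ q) (-p) (-q) := by
  ext x z
  rw [Matrix.conjTranspose_apply, WW_apply, WW_apply]
  have : z = x + q ↔ x = z + -q := by
    constructor <;> rintro rfl <;> simp
  by_cases h : z = x + q
  · rw [if_pos h, if_pos (this.mp h), op_star, h]
    congr 1
    simp only [dotProduct_add, neg_dotProduct]
    ring
  · rw [if_neg h, if_neg (fun h' => h (this.mpr h'))]
    simp

lemma WW_inj {c c' : ZMod d} {p q p' q' : Fin n → ZMod d}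
    (h : WW c p q = WW c' p' q') : c = c' ∧ p = p' ∧ q = q' := by
  have hq : q = q' := by
    by_contra hq
    have := congrFun (congrFun h q) 0
    rw [WW_apply, WW_apply, if_pos (by simp), if_neg (by simpa using hq)] at this
    exact op_ne _ this
  subst hq
  have key : ∀ x, c + p ⬝ᵥ x = c' + p' ⬝ᵥ x := by
    intro x
    have := congrFun (congrFun h x) (x - q)
    rw [WW_apply, WW_apply, if_pos (by simp), if_pos (by simp)] at this
    exact op_inj this
  have hc : c = c' := by simpa using key 0
  subst hc
  refine ⟨rfl, ?_, rfl⟩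
  funext i
  simpa using key (Pi.single i 1)

/-- symplectic form -/
def sp (w w' : (Fin n → ZMod d) × (Fin n → ZMod d)) : ZMod d := w.1 ⬝ᵥ w'.2 - w.2 ⬝ᵥ w'.1

/-- Symmetrised Weyl operators. -/
def TT (c : ZMod d) (w : (Fin n → ZMod d) × (Fin n → ZMod d)) : Mat d n :=
  WW (c - 2⁻¹ * (w.1 ⬝ᵥ w.2)) w.1 w.2

lemma sp_add_left (a b c : (Fin n → ZMod d) × (Fin n → ZMod d)) :
    sp (a + b) c = sp a c + sp b c := by
  simp only [sp, Prod.fst_add, Prod.snd_add, add_dotProduct]; ring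
lemma sp_add_right (a b c : (Fin n → ZMod d) × (Fin n → ZMod d)) :
    sp a (b + c) = sp a b + sp a c := by
  simp only [sp, Prod.fst_add, Prod.snd_add, dotProduct_add]; ring
lemma sp_smul_left (t : ZMod d) (a c : (Fin n → ZMod d) × (Fin n → ZMod d)) :
    sp (t • a) c = t * sp a c := by
  simp only [sp, Prod.smul_fst, Prod.smul_snd, smul_dotProduct, smul_eq_mul]; ring
lemma sp_smul_right (t : ZMod d) (a c : (Fin n → ZMod d) × (Fin n → ZMod d)) :
    sp a (t • c) = t * sp a c := by
  simp only [sp, Prod.smul_fst, Prod.smul_snd, dotProduct_smul, smul_eq_mul]; ring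
lemma sp_swap (a c : (Fin n → ZMod d) × (Fin n → ZMod d)) :
    sp a c = - sp c a := by
  simp only [sp]; rw [dotProduct_comm a.1, dotProduct_comm a.2]; ring
lemma sp_self (a : (Fin n → ZMod d) × (Fin n → ZMod d)) : sp a a = 0 := by
  simp only [sp]; rw [dotProduct_comm a.1]; ring

lemma TT_mem (c : ZMod d) (w) : (TT c w : Mat d n) ∈ Pauli d n := ⟨_, _, _, rfl⟩

lemma mem_Pauli {M : Mat d n} (h : M ∈ Pauli d n) : ∃ c w, M = TT c w := by
  obtain ⟨c, p, q, rfl⟩ := h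
  refine ⟨c + 2⁻¹ * (p ⬝ᵥ q), (p, q), ?_⟩
  simp [TT, WW]

lemma TT_inj {c c' : ZMod d} {w w' : (Fin n → ZMod d) × (Fin n → ZMod d)}
    (h : TT c w = TT c' w') : c = c' ∧ w = w' := by
  obtain ⟨h1, h2, h3⟩ := WW_inj h
  have : w = w' := Prod.ext h2 h3
  subst this
  exact ⟨by simpa using h1, rfl⟩

lemma TT_mul (h2 : (2 : ZMod d)⁻¹ * 2 = 1) (c c' : ZMod d) (w w' : (Fin n → ZMod d) × (Fin n → ZMod d)) :
    TT c w * TT c' w' = TT (c + c' + 2⁻¹ * sp w w') (w + w') := by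
  simp only [TT, WW_mul, sp, Prod.fst_add, Prod.snd_add]
  congr 1
  simp only [dotProduct_add, add_dotProduct]
  rw [dotProduct_comm w.2 w'.1]
  linear_combination (w'.1 ⬝ᵥ w.2) * h2

lemma TT_one : TT (d := d) (n := n) 0 0 = 1 := by
  simp [TT, WW_one]

lemma TT_smul (c c' : ZMod d) (w : (Fin n → ZMod d) × (Fin n → ZMod d)) :
    TT (c + c') w = omegaPow d c • TT c' w := by
  simp only [TT, WW, add_sub_assoc, op_add, mul_smul]

lemma TT_star (h2 : (2 : ZMod d)⁻¹ * 2 = 1) (c : ZMod d) (w : (Fin n → ZMod d) × (Fin n → ZMod d)) :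
    (TT c w)ᴴ = TT (-c) (-w) := by
  simp only [TT, WW_star, Prod.fst_neg, Prod.snd_neg, neg_dotProduct, dotProduct_neg, neg_neg]
  congr 1
  linear_combination (w.1 ⬝ᵥ w.2) * h2

lemma TT_star_mul (h2 : (2 : ZMod d)⁻¹ * 2 = 1) (c : ZMod d) (w : (Fin n → ZMod d) × (Fin n → ZMod d)) :
    (TT c w)ᴴ * TT c w = 1 := by
  rw [TT_star h2, TT_mul h2, ← TT_one]
  congr 1
  · simp [show sp (-w) w = 0 by simp [sp, dotProduct_comm w.1]]
  · simp

/-- commutation relation -/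
lemma TT_comm (h2 : (2 : ZMod d)⁻¹ * 2 = 1) (c c' : ZMod d) (w w' : (Fin n → ZMod d) × (Fin n → ZMod d)) :
    TT c w * TT c' w' = omegaPow d (sp w w') • (TT c' w' * TT c w) := by
  rw [TT_mul h2, TT_mul h2, ← TT_smul, add_comm w' w, sp_swap w' w]
  congr 1
  linear_combination (sp w w') * h2

lemma ZP_eq (p : Fin n → ZMod d) : ZP d n p = TT 0 (p, 0) := by
  ext x z
  simp only [TT, WW_apply, ZP, Matrix.diagonal_apply]
  simp

lemma XQ_eq (q : Fin n → ZMod d) : XQ d n q = TT 0 (0, q) := by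
  ext x z
  simp only [TT, WW_apply, XQ, Matrix.of_apply]
  simp [op_zero]

lemma TT_ne (c : ZMod d) (w) : (TT c w : Mat d n) ≠ 0 := by
  intro h
  have := congrFun (congrFun h w.2) 0
  rw [TT, WW_apply, if_pos (by simp)] at this
  exact op_ne _ this

/-! conjugation -/

lemma cj_mul {G A B : Mat d n} (hG : Gᴴ * G = 1) :
    G * (A * B) * Gᴴ = (G * A * Gᴴ) * (G * B * Gᴴ) := by
  calc G * (A * B) * Gᴴ = G * A * 1 * B * Gᴴ := by simp only [mul_one, mul_assoc]
    _ = _ := by rw [← hG]; simp only [mul_assoc]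

lemma conj_cancel {G A : Mat d n} (hG : Gᴴ * G = 1) : Gᴴ * (G * A * Gᴴ) * G = A := by
  calc Gᴴ * (G * A * Gᴴ) * G = (Gᴴ * G) * A * (Gᴴ * G) := by simp only [mul_assoc]
    _ = _ := by rw [hG]; simp

lemma sp_conj (h2 : (2 : ZMod d)⁻¹ * 2 = 1) {G : Mat d n} (hG : Gᴴ * G = 1) {a b a' b' : ZMod d}
    {u v u' v' : (Fin n → ZMod d) × (Fin n → ZMod d)}
    (hu : G * TT a u * Gᴴ = TT a' u') (hv : G * TT b v * Gᴴ = TT b' v') : sp u v = sp u' v' := by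
  have h1 := TT_comm h2 a' b' u' v'
  have h3 : TT a' u' * TT b' v' = omegaPow d (sp u v) • (TT b' v' * TT a' u') := by
    rw [← hu, ← hv, ← cj_mul hG, ← cj_mul hG, TT_comm h2]
    simp
  rw [h1, TT_mul h2, ← TT_smul, ← TT_smul] at h3
  have := (TT_inj h3).1
  exact (add_right_cancel this).symm

lemma uni {G : Mat d n} (h : G ∈ Matrix.unitaryGroup (Fin n → ZMod d) ℂ) :
    Gᴴ * G = 1 ∧ G * Gᴴ = 1 :=
  ⟨Matrix.mem_unitaryGroup_iff'.mp h, Matrix.mem_unitaryGroup_iff.mp h⟩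

lemma uni_star {G : Mat d n} (h : G ∈ Matrix.unitaryGroup (Fin n → ZMod d) ℂ) :
    Gᴴ ∈ Matrix.unitaryGroup (Fin n → ZMod d) ℂ := by
  rw [Matrix.mem_unitaryGroup_iff]
  simpa [Matrix.star_eq_conjTranspose] using (uni h).1

lemma Pauli_finite : (Pauli d n).Finite := by
  have : Pauli d n = Set.range (fun t : ZMod d × (Fin n → ZMod d) × (Fin n → ZMod d) => WW t.1 t.2.1 t.2.2) := by
    ext M
    constructor
    · rintro ⟨c, p, q, rfl⟩
      exact ⟨(c, p, q), rfl⟩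
    · rintro ⟨⟨c, p, q⟩, rfl⟩
      exact ⟨c, p, q, rfl⟩
  rw [this]
  exact Set.finite_range _

lemma Clifford_star {C : Mat d n} (h : C ∈ Clifford d n) : Cᴴ ∈ Clifford d n := by
  refine ⟨uni_star h.1, fun P hP => ?_⟩
  have hs : Set.SurjOn (fun P => C * P * Cᴴ) (Pauli d n) (Pauli d n) := by
    have hf : Set.MapsTo (fun P => C * P * Cᴴ) (Pauli_finite (d := d) (n := n)).toFinset
        (Pauli_finite (d := d) (n := n)).toFinset := by
      intro P hP
      simp only [Set.Finite.coe_toFinset] at hP ⊢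
      exact h.2 P hP
    have := Finset.surjOn_of_injOn_of_card_le _ hf (fun A _ B _ hAB => by
      have e := congrArg (fun M => Cᴴ * M * C) hAB
      simpa only [conj_cancel (uni h.1).1] using e) le_rfl
    simpa using this
  obtain ⟨Q, hQ, rfl⟩ := hs hP
  simp only [Matrix.conjTranspose_conjTranspose]
  rwa [conj_cancel (uni h.1).1]

lemma Clifford_mul {C C' : Mat d n} (h : C ∈ Clifford d n) (h' : C' ∈ Clifford d n) :
    C * C' ∈ Clifford d n := by
  refine ⟨mul_mem h.1 h'.1, fun P hP => ?_⟩
  have := h.2 _ (h'.2 P hP)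
  simpa only [Matrix.conjTranspose_mul, mul_assoc] using this

lemma Third_mul {C C' G : Mat d n} (h : C ∈ Clifford d n) (hG : G ∈ Third d n) (h' : C' ∈ Clifford d n) :
    C * G * C' ∈ Third d n := by
  refine ⟨mul_mem (mul_mem h.1 hG.1) h'.1, fun P hP => ?_⟩
  have := Clifford_mul (Clifford_mul h (hG.2 _ (h'.2 P hP))) (Clifford_star h)
  simpa only [Matrix.conjTranspose_mul, mul_assoc] using this

/-- Commuting with all Z gives diagonal. -/
lemma diag_of_comm {M : Mat d n} (h : ∀ i, M * Zi d n i = Zi d n i * M) : M.IsDiag := by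
  intro x z hxz
  obtain ⟨i, hi⟩ := Function.ne_iff.mp hxz
  have := congrFun (congrFun (h i) x) z
  simp only [Zi, ZP, Matrix.mul_diagonal, Matrix.diagonal_mul, single_dotProduct, one_mul] at this
  by_contra h0
  rw [mul_comm] at this
  exact hi (op_inj (mul_right_cancel₀ h0 this)).symm

lemma const_of_comm {M : Mat d n} (h : ∀ q, M * XQ d n q = XQ d n q * M) (x : Fin n → ZMod d) :
    M x x = M 0 0 := by
  have := congrFun (congrFun (h x) x) 0
  rw [Matrix.mul_apply, Matrix.mul_apply, Finset.sum_eq_single x, Finset.sum_eq_single 0] at this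
  · simpa [XQ] using this
  · intro b _ hb
    simp [XQ, hb]
  · simp
  · intro b _ hb
    simp [XQ, hb]
  · simp

lemma smul_closed {V : Type*} [AddCommMonoid V] [Module (ZMod d) V] (R : V → Prop) (h0 : R 0)
    (hadd : ∀ a b, R a → R b → R (a + b)) (t : ZMod d) (a : V) (h : R a) : R (t • a) := by
  have key : ∀ k : ℕ, R ((k : ZMod d) • a) := by
    intro k
    induction k with
    | zero => simpa using h0
    | succ k ih =>
      push_cast
      rw [add_smul, one_smul]
      exact hadd _ _ ih h
  simpa using key t.val

/-! quadratic gates -/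
lemma quad_mul (Φ Ψ : Matrix (Fin n) (Fin n) (ZMod d)) :
    quadGate d n (Φ + Ψ) = quadGate d n Φ * quadGate d n Ψ := by
  simp [quadGate, Matrix.diagonal_mul_diagonal, Matrix.add_mulVec, dotProduct_add, op_add]

lemma quad_zero : quadGate d n 0 = 1 := by
  simp [quadGate, op_zero]

lemma WW_quad (Ψ : Matrix (Fin n) (Fin n) (ZMod d)) (c : ZMod d) (p q : Fin n → ZMod d) :
    WW c p q * quadGate d n Ψ = quadGate d n Ψ *
      WW (c + q ⬝ᵥ (Ψ *ᵥ q)) (p - q ᵥ* Ψ - Ψ *ᵥ q) q := by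
  ext x z
  rw [quadGate, Matrix.mul_diagonal, Matrix.diagonal_mul, WW_apply, WW_apply]
  split_ifs with h
  · rw [← op_add, ← op_add, h]
    congr 1
    simp only [dotProduct_add, add_dotProduct, sub_dotProduct, Matrix.mulVec_add,
      Matrix.add_vecMul, Matrix.dotProduct_mulVec]
    rw [dotProduct_comm (Ψ *ᵥ q) z, dotProduct_comm (Ψ *ᵥ q) q]
    simp only [Matrix.dotProduct_mulVec]
    ring
  · simp

lemma quad_Pauli {Φ : Matrix (Fin n) (Fin n) (ZMod d)} (h2 : (2 : ZMod d)⁻¹ * 2 = 1)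
    (h : quadGate d n Φ ∈ Pauli d n) (z : Fin n → ZMod d) : z ⬝ᵥ (Φ *ᵥ z) = 0 := by
  obtain ⟨c, p, q, h⟩ := h
  change _ = WW c p q at h
  have hq : q = 0 := by
    by_contra hq
    have := congrFun (congrFun h 0) 0
    rw [WW_apply, if_neg (by simpa using Ne.symm hq), quadGate, Matrix.diagonal_apply_eq] at this
    exact op_ne _ this
  subst hq
  have key : ∀ x, x ⬝ᵥ (Φ *ᵥ x) = c + p ⬝ᵥ x := by
    intro x
    have := congrFun (congrFun h x) x
    rw [WW_apply, if_pos (by simp), quadGate, Matrix.diagonal_apply_eq] at this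
    exact op_inj this
  have k0 := key 0
  have k1 := key z
  have k2 := key (-z)
  simp [Matrix.mulVec_neg] at k0 k2
  rw [← k0] at k1 k2
  linear_combination (-(z ⬝ᵥ (Φ *ᵥ z))) * h2 + 2⁻¹ * k1 + 2⁻¹ * k2

end helpers

section helpers2
set_option linter.unusedSectionVars false
variable {d n : ℕ} [NeZero d]

lemma sp_nondeg (hp : Nat.Prime d) {w : (Fin n → ZMod d) × (Fin n → ZMod d)} (hw : w ≠ 0) :
    ∃ x, sp w x = 1 := by
  have := Fact.mk hp
  by_cases h1 : w.1 = 0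
  · have h2 : w.2 ≠ 0 := fun h2 => hw (Prod.ext h1 h2)
    obtain ⟨i, hi⟩ := Function.ne_iff.mp h2
    refine ⟨(Pi.single i (-(w.2 i)⁻¹), 0), ?_⟩
    simp only [Pi.zero_apply] at hi
    simp [sp, hi]
  · obtain ⟨i, hi⟩ := Function.ne_iff.mp h1
    refine ⟨(0, Pi.single i ((w.1 i)⁻¹)), ?_⟩
    simp only [Pi.zero_apply] at hi
    simp [sp, hi]

lemma sp_extend (hp : Nat.Prime d) {u v : (Fin n → ZMod d) × (Fin n → ZMod d)}
    (hind : ∀ s t : ZMod d, s • u + t • v = 0 → s = 0 ∧ t = 0) :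
    ∃ w1 w2, sp u w1 = 1 ∧ sp v w1 = 0 ∧ sp u w2 = 0 ∧ sp v w2 = 1 := by
  have := Fact.mk hp
  have hu : u ≠ 0 := by
    rintro rfl
    have := (hind 1 0 (by simp)).1
    exact one_ne_zero this
  obtain ⟨x, hx⟩ := sp_nondeg hp hu
  have hv : (-(sp v x)) • u + (1 : ZMod d) • v ≠ 0 := by
    intro h
    exact one_ne_zero (hind _ _ h).2
  obtain ⟨y, hy⟩ := sp_nondeg hp hv
  simp only [sp_add_left, sp_smul_left, one_mul] at hy
  refine ⟨x + (-(sp v x)) • (y + (-(sp u y)) • x), y + (-(sp u y)) • x, ?_, ?_, ?_, ?_⟩ <;>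
    simp only [sp_add_right, sp_smul_right, hx]
  · ring
  · linear_combination (-(sp v x)) * hy
  · ring
  · linear_combination hy

/-- Construct a Clifford from a symplectic basis. -/
lemma exists_clifford (hp : Nat.Prime d) (h2 : (2 : ZMod d)⁻¹ * 2 = 1)
    {u v : (Fin 2 → ZMod d) × (Fin 2 → ZMod d)}
    (hind : ∀ s t : ZMod d, s • u + t • v = 0 → s = 0 ∧ t = 0) (huv : sp u v = 0) (a b : ZMod d) :
    ∃ C ∈ Clifford d 2, C * Zi d 2 0 * Cᴴ = TT a u ∧ C * Zi d 2 1 * Cᴴ = TT b v := by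
  have := Fact.mk hp
  obtain ⟨w1, w2', huw1, hvw1, huw2', hvw2'⟩ := sp_extend hp hind
  obtain ⟨w2, huw2, hvw2, hww⟩ : ∃ w2, sp u w2 = 0 ∧ sp v w2 = 1 ∧ sp w1 w2 = 0 := by
    refine ⟨w2' + (sp w1 w2') • u, ?_, ?_, ?_⟩ <;> simp only [sp_add_right, sp_smul_right]
    · rw [huw2', sp_self]; ring
    · rw [hvw2', sp_swap v u, huv]; ring
    · rw [sp_swap w1 u, huw1]; ring
  set A : (Fin 2 → ZMod d) → Mat d 2 := fun s => TT (s 0 * a + s 1 * b) (s 0 • u + s 1 • v) with hA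
  set B : (Fin 2 → ZMod d) → Mat d 2 := fun s => TT 0 (s 0 • w1 + s 1 • w2) with hB
  have hAadd : ∀ s t, A (s + t) = A s * A t := by
    intro s t
    simp only [hA, TT_mul h2, sp_add_left, sp_add_right, sp_smul_left, sp_smul_right, sp_self,
      sp_swap v u, huv, Pi.add_apply]
    congr 1
    · ring
    · module
  have hBadd : ∀ s t, B (s + t) = B s * B t := by
    intro s t
    simp only [hB, TT_mul h2, sp_add_left, sp_add_right, sp_smul_left, sp_smul_right, sp_self,
      sp_swap w2 w1, hww, Pi.add_apply]
    congr 1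
    · ring
    · module
  have hAB : ∀ s t, A s * B t = omegaPow d (s ⬝ᵥ t) • (B t * A s) := by
    intro s t
    simp only [hA, hB]
    rw [TT_comm h2]
    congr 2
    simp only [sp_add_left, sp_add_right, sp_smul_left, sp_smul_right, huw1, huw2, hvw1, hvw2,
      dotProduct, Fin.sum_univ_two]
    ring
  have hAstar : ∀ s, (A s)ᴴ * A s = 1 := fun s => TT_star_mul h2 _ _
  have hBstar : ∀ s, (B s)ᴴ * B s = 1 := fun s => TT_star_mul h2 _ _
  have hA0 : A 0 = 1 := by simp [hA, TT_one]
  have hB0 : B 0 = 1 := by simp [hB, TT_one]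
  -- projector
  set Q : Mat d 2 := ∑ s, A s with hQ
  have hAQ : ∀ t, A t * Q = Q := by
    intro t
    rw [hQ, Finset.mul_sum]
    simp only [← hAadd]
    exact Fintype.sum_equiv (Equiv.addLeft t) _ _ (fun _ => rfl)
  have htr : ∀ s, s ≠ 0 → (A s).trace = 0 := by
    intro s hs
    obtain ⟨i, hi⟩ := Function.ne_iff.mp hs
    have e : (A s).trace = omegaPow d (s i) * (A s).trace := by
      have h := hAB s (Pi.single i 1)
      rw [dotProduct_single, mul_one] at h
      have h' : (B (Pi.single i 1))ᴴ * (A s * B (Pi.single i 1)) = omegaPow d (s i) • A s := by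
        rw [h, Matrix.mul_smul, ← mul_assoc, hBstar, one_mul]
      have := congrArg Matrix.trace h'
      rw [Matrix.trace_mul_comm, mul_assoc, mul_eq_one_comm.mp (hBstar _), mul_one, Matrix.trace_smul] at this
      simpa using this
    by_contra h0
    have h1 : omegaPow d (s i) = omegaPow d 0 := by
      rw [op_zero]
      exact mul_right_cancel₀ h0 (by rw [← e, one_mul])
    exact hi (op_inj h1)
  have hQ0 : Q ≠ 0 := by
    intro h0
    have := congrArg Matrix.trace h0
    rw [hQ, Matrix.trace_sum, Finset.sum_eq_single 0 (fun s _ hs => htr s hs) (by simp), hA0,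
      Matrix.trace_one, Matrix.trace_zero] at this
    exact Fintype.card_ne_zero (Nat.cast_eq_zero.mp this)
  obtain ⟨y, x, hyx⟩ : ∃ y x, Q y x ≠ 0 := by
    by_contra! h
    exact hQ0 (Matrix.ext h)
  set C0 : Mat d 2 := Matrix.of fun z' z => (B z * Q) z' x with hC0
  have hCZ : ∀ p, C0 * ZP d 2 p = A p * C0 := by
    intro p
    ext z' z
    have e : (A p * C0) z' z = (A p * (B z * Q)) z' x := by
      simp only [Matrix.mul_apply (M := A p), hC0, Matrix.of_apply]
    rw [e, ZP, Matrix.mul_diagonal, ← mul_assoc, hAB, Matrix.smul_mul, mul_assoc, hAQ,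
      Matrix.smul_apply, smul_eq_mul, mul_comm]
    rfl
  have hCX : ∀ q, C0 * XQ d 2 q = B q * C0 := by
    intro q
    ext z' z
    have e : (B q * C0) z' z = (B q * (B z * Q)) z' x := by
      simp only [Matrix.mul_apply (M := B q), hC0, Matrix.of_apply]
    rw [e, ← mul_assoc, ← hBadd, add_comm, Matrix.mul_apply, Finset.sum_eq_single (z + q)]
    · simp [XQ, hC0]
    · intro t _ ht
      simp [XQ, ht]
    · simp
  have hcomm : ∀ (U V : Mat d 2), Uᴴ * U = 1 → Vᴴ * V = 1 → C0 * U = V * C0 →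
      (C0ᴴ * C0) * U = U * (C0ᴴ * C0) := by
    intro U V hU hV h
    have h' : Uᴴ * C0ᴴ = C0ᴴ * Vᴴ := by
      rw [← Matrix.conjTranspose_mul, h, Matrix.conjTranspose_mul]
    have hU' : U * Uᴴ = 1 := mul_eq_one_comm.mp hU
    calc (C0ᴴ * C0) * U = (U * Uᴴ) * C0ᴴ * (C0 * U) := by rw [hU', one_mul, mul_assoc]
      _ = U * (Uᴴ * C0ᴴ) * (V * C0) := by rw [h]; simp only [mul_assoc]
      _ = U * C0ᴴ * (Vᴴ * V) * C0 := by rw [h']; simp only [mul_assoc]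
      _ = _ := by rw [hV, mul_one, mul_assoc]
  have hdiag : (C0ᴴ * C0).IsDiag := diag_of_comm fun i =>
    hcomm _ _ (by rw [Zi, ZP_eq]; exact TT_star_mul h2 _ _) (hAstar _) (hCZ _)
  have hconst := const_of_comm (M := C0ᴴ * C0) fun q =>
    hcomm _ _ (by rw [XQ_eq]; exact TT_star_mul h2 _ _) (hBstar _) (hCX _)
  set r : ℝ := ∑ z, ‖C0 z 0‖ ^ 2 with hr
  have hr00 : (C0ᴴ * C0) 0 0 = (r : ℂ) := by
    rw [Matrix.mul_apply, hr]
    push_cast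
    refine Finset.sum_congr rfl fun z _ => ?_
    rw [Matrix.conjTranspose_apply]
    exact Complex.conj_mul' _
  have hrpos : 0 < r := by
    apply Finset.sum_pos'
    · intros; positivity
    · refine ⟨y, Finset.mem_univ _, ?_⟩
      have : C0 y 0 ≠ 0 := by
        simp only [hC0, Matrix.of_apply, hB0, one_mul]
        exact hyx
      positivity
  have hCC : C0ᴴ * C0 = (r : ℂ) • 1 := by
    ext s t
    by_cases hst : s = t
    · subst hst
      rw [hconst, hr00]; simp
    · rw [hdiag hst]; simp [hst]
  set k : ℂ := (((Real.sqrt r)⁻¹ : ℝ) : ℂ) with hk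
  have hkk : star k * k * (r : ℂ) = 1 := by
    have h1 : star k = k := Complex.conj_ofReal _
    rw [h1, hk, ← Complex.ofReal_mul, ← Complex.ofReal_mul]
    have := Real.mul_self_sqrt hrpos.le
    have h3 : Real.sqrt r ≠ 0 := (Real.sqrt_pos.mpr hrpos).ne'
    rw [show (Real.sqrt r)⁻¹ * (Real.sqrt r)⁻¹ * r = 1 by
      rw [← mul_inv, this]; exact inv_mul_cancel₀ hrpos.ne']
    simp
  set C : Mat d 2 := k • C0 with hC
  have hU : Cᴴ * C = 1 := by
    rw [hC, Matrix.conjTranspose_smul, Matrix.smul_mul, Matrix.mul_smul, hCC, smul_smul, smul_smul,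
      hkk, one_smul]
  have hU' : C * Cᴴ = 1 := mul_eq_one_comm.mp hU
  have hZ : ∀ p, C * ZP d 2 p * Cᴴ = A p := by
    intro p
    have : C * ZP d 2 p = A p * C := by
      rw [hC, Matrix.smul_mul, hCZ, Matrix.mul_smul]
    rw [this, mul_assoc, hU', mul_one]
  have hX : ∀ q, C * XQ d 2 q * Cᴴ = B q := by
    intro q
    have : C * XQ d 2 q = B q * C := by
      rw [hC, Matrix.smul_mul, hCX, Matrix.mul_smul]
    rw [this, mul_assoc, hU', mul_one]
  refine ⟨C, ⟨Matrix.mem_unitaryGroup_iff'.mpr hU, ?_⟩, ?_, ?_⟩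
  · rintro P ⟨c, p, q, rfl⟩
    rw [Matrix.mul_smul, Matrix.smul_mul, cj_mul hU, hZ, hX]
    simp only [hA, hB]
    rw [TT_mul h2, ← TT_smul]
    exact TT_mem _ _
  · rw [Zi, hZ]; simp [hA]
  · rw [Zi, hZ]; simp [hA]

/-- conj relation: `K` sends Weyl `w` to quadratic gate `Φ` times Pauli. -/
lemma quad_rel {G : Mat d n} (h2 : (2 : ZMod d)⁻¹ * 2 = 1) (hG : Gᴴ * G = 1)
    {w w' : (Fin n → ZMod d) × (Fin n → ZMod d)} {Φ Ψ : Matrix (Fin n) (Fin n) (ZMod d)}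
    (h : ∃ c, ∃ P ∈ Pauli d n, G * TT c w * Gᴴ = quadGate d n Φ * P)
    (h' : ∃ c, ∃ P ∈ Pauli d n, G * TT c w' * Gᴴ = quadGate d n Ψ * P) :
    ∃ c, ∃ P ∈ Pauli d n, G * TT c (w + w') * Gᴴ = quadGate d n (Φ + Ψ) * P := by
  obtain ⟨c, P, ⟨e, p, q, rfl⟩, h⟩ := h
  obtain ⟨c', P', ⟨e', p', q', rfl⟩, h'⟩ := h'
  change _ = _ * WW e p q at h
  change _ = _ * WW e' p' q' at h'
  refine ⟨c + c' + 2⁻¹ * sp w w', WW (e + q ⬝ᵥ (Ψ *ᵥ q)) (p - q ᵥ* Ψ - Ψ *ᵥ q) q * WW e' p' q',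
    by rw [WW_mul]; exact ⟨_, _, _, rfl⟩, ?_⟩
  rw [← TT_mul h2, cj_mul hG, h, h', mul_assoc, ← mul_assoc (WW e p q), WW_quad, quad_mul]
  simp only [mul_assoc]

lemma pauli_rel {G : Mat d n} (h2 : (2 : ZMod d)⁻¹ * 2 = 1) (hG : Gᴴ * G = 1)
    {w w' v v' : (Fin n → ZMod d) × (Fin n → ZMod d)}
    (h : ∃ c e, G * TT c w * Gᴴ = TT e v)
    (h' : ∃ c e, G * TT c w' * Gᴴ = TT e v') :
    ∃ c e, G * TT c (w + w') * Gᴴ = TT e (v + v') := by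
  obtain ⟨c, e, h⟩ := h
  obtain ⟨c', e', h'⟩ := h'
  refine ⟨c + c' + 2⁻¹ * sp w w', e + e' + 2⁻¹ * sp v v', ?_⟩
  rw [← TT_mul h2, cj_mul hG, h, h', TT_mul h2]

end helpers2

section helpers3
set_option linter.unusedSectionVars false
variable {d : ℕ} [NeZero d]

/-- Reordering of coordinates. -/
def w4 (u : Fin 4 → ZMod d) : (Fin 2 → ZMod d) × (Fin 2 → ZMod d) := (![u 0, u 2], ![u 1, u 3])

lemma symp4_eq (u v : Fin 4 → ZMod d) : symp4 d u v = sp (w4 u) (w4 v) := by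
  simp [symp4, sp, w4, dotProduct, Fin.sum_univ_two]
  ring

lemma w4_lin (s t : ZMod d) (u v : Fin 4 → ZMod d) : w4 (s • u + t • v) = s • w4 u + t • w4 v := by
  simp only [w4]
  ext i <;> fin_cases i <;> simp

lemma w4_zero {u : Fin 4 → ZMod d} (h : w4 u = 0) : u = 0 := by
  simp only [w4, Prod.ext_iff] at h
  obtain ⟨h1, h2⟩ := h
  have a := congrFun h1 0
  have b := congrFun h1 1
  have c := congrFun h2 0
  have e := congrFun h2 1
  simp at a b c e
  funext i
  fin_cases i <;> simpa

lemma w4_surj (w : (Fin 2 → ZMod d) × (Fin 2 → ZMod d)) : ∃ u, w4 u = w := by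
  refine ⟨![w.1 0, w.2 0, w.1 1, w.2 1], ?_⟩
  simp only [w4]
  ext i <;> fin_cases i <;> simp

lemma w4_sum (u : Fin 4 → ZMod d) : w4 u = u 0 • (Pi.single 0 1, 0) + u 1 • (0, Pi.single 0 1)
    + u 2 • (Pi.single 1 1, 0) + u 3 • (0, Pi.single 1 1) := by
  simp only [w4]
  ext i <;> fin_cases i <;> simp

lemma quad_all (h2 : (2 : ZMod d)⁻¹ * 2 = 1) {G : Mat d 2} (hG : Gᴴ * G = 1)
    (Φ : Fin 4 → Matrix (Fin 2) (Fin 2) (ZMod d))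
    (P : Fin 4 → Mat d 2) (hP : ∀ i, P i ∈ Pauli d 2)
    (h1 : G * Zi d 2 0 * Gᴴ = quadGate d 2 (Φ 0) * P 0)
    (h2' : G * Xi d 2 0 * Gᴴ = quadGate d 2 (Φ 1) * P 1)
    (h3 : G * Zi d 2 1 * Gᴴ = quadGate d 2 (Φ 2) * P 2)
    (h4 : G * Xi d 2 1 * Gᴴ = quadGate d 2 (Φ 3) * P 3) (u : Fin 4 → ZMod d) :
    ∃ c, ∃ Q ∈ Pauli d 2, G * TT c (w4 u) * Gᴴ =
      quadGate d 2 (u 0 • Φ 0 + u 1 • Φ 1 + u 2 • Φ 2 + u 3 • Φ 3) * Q := by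
  have hG' : G * Gᴴ = 1 := mul_eq_one_comm.mp hG
  let R : (((Fin 2 → ZMod d) × (Fin 2 → ZMod d)) × Matrix (Fin 2) (Fin 2) (ZMod d)) → Prop :=
    fun x => ∃ c, ∃ Q ∈ Pauli d 2, G * TT c x.1 * Gᴴ = quadGate d 2 x.2 * Q
  have R0 : R 0 := by
    refine ⟨0, TT 0 0, TT_mem _ _, ?_⟩
    simp [TT_one, hG', quad_zero]
  have Radd : ∀ a b, R a → R b → R (a + b) := fun a b ha hb => quad_rel h2 hG ha hb
  have Rs := smul_closed (d := d) R R0 Radd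
  have r1 : R ((Pi.single 0 1, 0), Φ 0) := ⟨0, P 0, hP 0, by rw [← h1, Zi, ZP_eq]⟩
  have r2 : R ((0, Pi.single 0 1), Φ 1) := ⟨0, P 1, hP 1, by rw [← h2', Xi, XQ_eq]⟩
  have r3 : R ((Pi.single 1 1, 0), Φ 2) := ⟨0, P 2, hP 2, by rw [← h3, Zi, ZP_eq]⟩
  have r4 : R ((0, Pi.single 1 1), Φ 3) := ⟨0, P 3, hP 3, by rw [← h4, Xi, XQ_eq]⟩
  have := Radd _ _ (Radd _ _ (Radd _ _ (Rs (u 0) _ r1) (Rs (u 1) _ r2)) (Rs (u 2) _ r3)) (Rs (u 3) _ r4)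
  rw [w4_sum]
  exact this

end helpers3

/-- A simplified two-qudit third-level gate `G`, with conjugate tuple
`D_{Φᵢ} Pᵢ`, is semi-Clifford iff the kernel of the 3×4 matrix of quadratic parts
contains a Lagrangian semibasis. -/
theorem stmt3 (d : ℕ) [NeZero d] (hp : Nat.Prime d) (hodd : Odd d)
    (G : Mat d 2) (hG : G ∈ Third d 2)
    (Φ : Fin 4 → Matrix (Fin 2) (Fin 2) (ZMod d)) (hsymm : ∀ i, (Φ i).IsSymm)
    (P : Fin 4 → Mat d 2) (hP : ∀ i, P i ∈ Pauli d 2)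
    (h1 : G * Zi d 2 0 * Gᴴ = quadGate d 2 (Φ 0) * P 0)
    (h2 : G * Xi d 2 0 * Gᴴ = quadGate d 2 (Φ 1) * P 1)
    (h3 : G * Zi d 2 1 * Gᴴ = quadGate d 2 (Φ 2) * P 2)
    (h4 : G * Xi d 2 1 * Gᴴ = quadGate d 2 (Φ 3) * P 3) :
    SemiClifford d 2 G ↔
      ∃ u v : Fin 4 → ZMod d,
        (Matrix.of fun (r : Fin 3) (i : Fin 4) =>
            ![(Φ i) 0 0, (Φ i) 1 1, 2 * (Φ i) 0 1] r) *ᵥ u = 0 ∧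
        (Matrix.of fun (r : Fin 3) (i : Fin 4) =>
            ![(Φ i) 0 0, (Φ i) 1 1, 2 * (Φ i) 0 1] r) *ᵥ v = 0 ∧
        LinearIndependent (ZMod d) ![u, v] ∧ symp4 d u v = 0 := by
  have := Fact.mk hp
  have h20 : (2 : ZMod d) ≠ 0 := by
    intro h
    have h' : ((2 : ℕ) : ZMod d) = 0 := by exact_mod_cast h
    rw [ZMod.natCast_eq_zero_iff] at h'
    have := (Nat.prime_dvd_prime_iff_eq hp Nat.prime_two).mp h'
    subst this
    exact absurd hodd (by decide)
  have h2i : (2 : ZMod d)⁻¹ * 2 = 1 := inv_mul_cancel₀ h20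
  obtain ⟨hU, hU'⟩ := uni hG.1
  have hall := quad_all h2i hU Φ P hP h1 h2 h3 h4
  have hM : ∀ u : Fin 4 → ZMod d, (Matrix.of fun (r : Fin 3) (i : Fin 4) =>
            ![(Φ i) 0 0, (Φ i) 1 1, 2 * (Φ i) 0 1] r) *ᵥ u = 0 ↔
      u 0 • Φ 0 + u 1 • Φ 1 + u 2 • Φ 2 + u 3 • Φ 3 = 0 := by
    intro u
    have hs : ∀ i, Φ i 1 0 = Φ i 0 1 := fun i => (hsymm i).apply 0 1
    constructor
    · intro h
      have a := congrFun h 0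
      have b := congrFun h 1
      have c := congrFun h 2
      simp only [Matrix.mulVec, dotProduct, Fin.sum_univ_four, Matrix.of_apply, Matrix.cons_val,
        Pi.zero_apply] at a b c
      have c' : Φ 0 0 1 * u 0 + Φ 1 0 1 * u 1 + Φ 2 0 1 * u 2 + Φ 3 0 1 * u 3 = 0 :=
        mul_left_cancel₀ h20 (by linear_combination c)
      ext i j
      fin_cases i <;> fin_cases j <;> simp [hs]
      · linear_combination a
      · linear_combination c'
      · linear_combination c'
      · linear_combination b
    · intro h
      have a := congrFun (congrFun h 0) 0
      have b := congrFun (congrFun h 1) 1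
      have c := congrFun (congrFun h 0) 1
      simp at a b c
      funext r
      fin_cases r <;>
        simp [Matrix.mulVec, dotProduct, Fin.sum_univ_four]
      · linear_combination a
      · linear_combination b
      · linear_combination 2 * c
  have hker : ∀ u, u 0 • Φ 0 + u 1 • Φ 1 + u 2 • Φ 2 + u 3 • Φ 3 = 0 ↔
      ∃ c, G * TT c (w4 u) * Gᴴ ∈ Pauli d 2 := by
    intro u
    obtain ⟨c, Q, hQ, h⟩ := hall u
    constructor
    · intro h0
      rw [h0, quad_zero, one_mul] at h
      exact ⟨c, h ▸ hQ⟩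
    · rintro ⟨c', h'⟩
      have e : G * TT c' (w4 u) * Gᴴ = omegaPow d (c' - c) • (quadGate d 2 (u 0 • Φ 0 + u 1 • Φ 1 + u 2 • Φ 2 + u 3 • Φ 3) * Q) := by
        rw [← h, ← Matrix.smul_mul, ← Matrix.mul_smul, ← TT_smul, sub_add_cancel]
      rw [e] at h'
      obtain ⟨f, w, h'⟩ := mem_Pauli h'
      obtain ⟨f', w', rfl⟩ := mem_Pauli hQ
      have hq : quadGate d 2 (u 0 • Φ 0 + u 1 • Φ 1 + u 2 • Φ 2 + u 3 • Φ 3) ∈ Pauli d 2 := by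
        have h'' := congrArg (fun M => (omegaPow d (-(c' - c)) • M) * TT (-f') (-w')) h'
        simp only [smul_smul, ← op_add, neg_add_cancel, op_zero, one_smul, mul_assoc] at h''
        rw [← TT_star h2i, mul_eq_one_comm.mp (TT_star_mul h2i _ _), mul_one, TT_star h2i, ← TT_smul,
          TT_mul h2i] at h''
        rw [h'']
        exact TT_mem _ _
      apply (hM u).mp
      have hz := quad_Pauli h2i hq
      have a := hz ![1, 0]
      have b := hz ![0, 1]
      have c := hz ![1, 1]
      have hs : ∀ i, Φ i 1 0 = Φ i 0 1 := fun i => (hsymm i).apply 0 1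
      simp [Matrix.mulVec, dotProduct, Fin.sum_univ_two, hs] at a b c
      funext r
      fin_cases r <;>
        simp [Matrix.mulVec, dotProduct, Fin.sum_univ_four]
      · linear_combination a
      · linear_combination b
      · linear_combination c - a - b
  simp only [hM, hker]
  constructor
  · rintro ⟨C₁, hC₁, C₂, hC₂, D, hD, hDd, rfl⟩
    have hC₂s := Clifford_star hC₂
    obtain ⟨hc, hc'⟩ := uni hC₂.1
    obtain ⟨hD1, hD2⟩ := uni hD.1
    have hcc : C₂ᴴᴴ * C₂ᴴ = 1 := by rwa [Matrix.conjTranspose_conjTranspose]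
    have get : ∀ w, ∃ c u, C₂ᴴ * TT 0 w * C₂ᴴᴴ = TT c (w4 u) := by
      intro w
      obtain ⟨c, v, h⟩ := mem_Pauli (hC₂s.2 _ (TT_mem 0 w))
      obtain ⟨u, rfl⟩ := w4_surj v
      exact ⟨c, u, h⟩
    have hDZ : ∀ p, D * ZP d 2 p * Dᴴ = ZP d 2 p := by
      intro p
      have : D * ZP d 2 p = ZP d 2 p * D := by
        obtain ⟨f, rfl⟩ : ∃ f, D = Matrix.diagonal f := ⟨_, hDd.diagonal_diag.symm⟩
        simp only [ZP, Matrix.diagonal_mul_diagonal, mul_comm]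
      rw [this, mul_assoc, hD2, mul_one]
    have hin : ∀ p c u, C₂ᴴ * TT 0 (p, 0) * C₂ᴴᴴ = TT c (w4 u) →
        (C₁ * D * C₂) * TT c (w4 u) * (C₁ * D * C₂)ᴴ ∈ Pauli d 2 := by
      intro p c u h
      rw [← h, ← ZP_eq]
      have := hC₁.2 (ZP d 2 p) (by rw [ZP_eq]; exact TT_mem _ _)
      convert this using 1
      rw [← hDZ p]
      simp only [Matrix.conjTranspose_mul, Matrix.conjTranspose_conjTranspose]
      calc _ = C₁ * D * (C₂ * C₂ᴴ) * ZP d 2 p * (C₂ * C₂ᴴ) * Dᴴ * C₁ᴴ := by simp only [hDZ, mul_assoc]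
        _ = _ := by rw [hc']; simp only [mul_one, mul_assoc]
    obtain ⟨c, u, hu⟩ := get (Pi.single 0 1, 0)
    obtain ⟨e, v, hv⟩ := get (Pi.single 1 1, 0)
    obtain ⟨c', x, hx⟩ := get (0, Pi.single 0 1)
    obtain ⟨e', y, hy⟩ := get (0, Pi.single 1 1)
    refine ⟨u, v, ⟨c, hin _ _ _ hu⟩, ⟨e, hin _ _ _ hv⟩, ?_, ?_⟩
    · rw [LinearIndependent.pair_iff]
      intro s t hst
      have e1 := sp_conj h2i hcc hu hx
      have e2 := sp_conj h2i hcc hu hy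
      have e3 := sp_conj h2i hcc hv hx
      have e4 := sp_conj h2i hcc hv hy
      have hw : s • w4 u + t • w4 v = 0 := by
        rw [← w4_lin, hst]; simp [w4]
      have hx0 : sp (s • w4 u + t • w4 v) (w4 x) = 0 := by rw [hw]; simp [sp]
      have hy0 : sp (s • w4 u + t • w4 v) (w4 y) = 0 := by rw [hw]; simp [sp]
      rw [sp_add_left, sp_smul_left, sp_smul_left] at hx0 hy0
      rw [← e1, ← e3] at hx0
      rw [← e2, ← e4] at hy0
      simp [sp] at hx0 hy0
      exact ⟨hx0, hy0⟩
    · rw [symp4_eq, ← sp_conj h2i hcc hu hv]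
      simp [sp]
  · rintro ⟨u, v, ⟨a, ha⟩, ⟨b, hb⟩, hind, hsp⟩
    rw [LinearIndependent.pair_iff] at hind
    rw [symp4_eq] at hsp
    have hind' : ∀ s t : ZMod d, s • w4 u + t • w4 v = 0 → s = 0 ∧ t = 0 := by
      intro s t hst
      rw [← w4_lin] at hst
      exact hind s t (w4_zero hst)
    obtain ⟨C, hC, hC0, hC1⟩ := exists_clifford hp h2i hind' hsp a b
    obtain ⟨hCu, hCu'⟩ := uni hC.1
    obtain ⟨a', u', ha⟩ := mem_Pauli ha
    obtain ⟨b', v', hb⟩ := mem_Pauli hb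
    set K := G * C with hK
    have hKu : K ∈ Matrix.unitaryGroup (Fin 2 → ZMod d) ℂ := mul_mem hG.1 hC.1
    obtain ⟨hK1, hK2⟩ := uni hKu
    have k0 : K * Zi d 2 0 * Kᴴ = TT a' u' := by
      rw [← ha, ← hC0, hK, Matrix.conjTranspose_mul]; simp only [mul_assoc]
    have k1 : K * Zi d 2 1 * Kᴴ = TT b' v' := by
      rw [← hb, ← hC1, hK, Matrix.conjTranspose_mul]; simp only [mul_assoc]
    have hsp' : sp u' v' = 0 := by
      rw [← sp_conj h2i hU ha hb, hsp]
    have hind2 : ∀ s t : ZMod d, s • u' + t • v' = 0 → s = 0 ∧ t = 0 := by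
      intro s t hst
      let R : (((Fin 2 → ZMod d) × (Fin 2 → ZMod d)) × ((Fin 2 → ZMod d) × (Fin 2 → ZMod d))) → Prop :=
        fun x => ∃ c e, K * TT c x.1 * Kᴴ = TT e x.2
      have R0 : R 0 := by
        refine ⟨0, 0, ?_⟩
        simp [TT_one, hK2]
      have Radd : ∀ a b, R a → R b → R (a + b) := fun a b ha hb => pauli_rel h2i hK1 ha hb
      have Rs := smul_closed (d := d) R R0 Radd
      have r1 : R ((Pi.single 0 1, 0), u') := ⟨0, a', by rw [← k0, Zi, ZP_eq]⟩
      have r2 : R ((Pi.single 1 1, 0), v') := ⟨0, b', by rw [← k1, Zi, ZP_eq]⟩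
      obtain ⟨c, e, h⟩ := Radd _ _ (Rs s _ r1) (Rs t _ r2)
      simp only [Prod.snd_add, Prod.smul_snd, Prod.fst_add, Prod.smul_fst, hst] at h
      have h' := congrArg (fun M => Kᴴ * M * K) h
      simp only [conj_cancel hK1] at h'
      rw [← add_zero e, TT_smul, TT_one, Matrix.mul_smul, Matrix.smul_mul, mul_one, hK1, ← TT_one,
        ← TT_smul] at h'
      have hw := congrArg Prod.fst (TT_inj h').2
      have hw0 := congrFun hw 0
      have hw1 := congrFun hw 1
      simp at hw0 hw1
      exact ⟨hw0, hw1⟩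
    obtain ⟨E, hE, hE0, hE1⟩ := exists_clifford hp h2i hind2 hsp' a' b'
    obtain ⟨hEu, hEu'⟩ := uni hE.1
    refine ⟨E, hE, Cᴴ, Clifford_star hC, Eᴴ * G * C, Third_mul (Clifford_star hE) hG hC, ?_, ?_⟩
    · apply diag_of_comm
      have main : ∀ Z : Mat d 2, E * Z * Eᴴ = K * Z * Kᴴ →
          Eᴴ * G * C * Z = Z * (Eᴴ * G * C) := by
        intro Z h
        calc Eᴴ * G * C * Z = Eᴴ * (K * Z * Kᴴ) * K := by
              rw [mul_assoc Eᴴ G C, ← hK]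
              simp only [mul_assoc, hK1, mul_one]
          _ = (Eᴴ * E) * Z * (Eᴴ * K) := by rw [← h]; simp only [mul_assoc]
          _ = _ := by rw [hEu, one_mul, hK]; simp only [mul_assoc]
      intro i
      fin_cases i
      · exact main _ (hE0.trans k0.symm)
      · exact main _ (hE1.trans k1.symm)
    · calc G = (E * Eᴴ) * G * (C * Cᴴ) := by rw [hEu', hCu', one_mul, mul_one]
        _ = _ := by simp only [mul_assoc]

end
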